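/- A nonprincipal ultrafilter u on ℕ is a Ramsey ultrafilter if and only if for every n ≥ 1 and every partition P of [ω]^n (arbitrary, not necessarily finite), u contains some set X that is canonical for P. -/

import Mathlib

/-! Common definitions. -/

/-- The `i`-th smallest element of a finite set of naturals (default 0 if `i ≥ |s|`). -/
def nth (s : Finset ℕ) (i : ℕ) : ℕ := (s.sort (· ≤ ·)).getD i 0

/-- `[ω]^n` : the set of `n`-element subsets of `ℕ` (as `Finset`s). -/
def cube (n : ℕ) : Set (Finset ℕ) := {s | s.card = n}

/-- `P` is a partition of `Z` (one member may be empty). -/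
def IsPartitionOn (Z : Set (Finset ℕ)) (P : Set (Set (Finset ℕ))) : Prop :=
  ⋃₀ P = Z ∧ ∀ A ∈ P, ∀ B ∈ P, A ∩ B = ∅ ∨ A = B

/-- The equivalence relation `≈_P` induced by a partition `P`. -/
def EquivP (P : Set (Set (Finset ℕ))) (p q : Finset ℕ) : Prop := ∃ A ∈ P, p ∈ A ∧ q ∈ A

/-- `X` is `I`-canonical for a partition `P` of `[ω]^n`. -/
def ICanon (n : ℕ) (P : Set (Set (Finset ℕ))) (I : Set ℕ) (X : Set ℕ) : Prop :=
  ∀ p q : Finset ℕ, ↑p ⊆ X → p.card = n → ↑q ⊆ X → q.card = n →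
    (EquivP P p q ↔ ∀ i ∈ I, nth p i = nth q i)

/-- `X` is canonical for a partition `P` of `[ω]^n`. -/
def Canon (n : ℕ) (P : Set (Set (Finset ℕ))) (X : Set ℕ) : Prop :=
  ∃ I : Set ℕ, I ⊆ Set.Iio n ∧ ICanon n P I X

/-- `X` is homogeneous for a partition `P` of `[ω]^n`. -/
def Homog (n : ℕ) (P : Set (Set (Finset ℕ))) (X : Set ℕ) : Prop :=
  ∃ A ∈ P, ∀ s : Finset ℕ, ↑s ⊆ X → s.card = n → s ∈ A

/-- `[2n]^n` : the `n`-element subsets of `{0, …, 2n-1}`. -/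
def idx (n : ℕ) : Finset (Finset ℕ) := Finset.powersetCard n (Finset.range (2 * n))

/-- The set `Q_{pq} = { z ∈ [ω]^{2n} : {z_[i] : i ∈ p} ≈_P {z_[i] : i ∈ q} }`. -/
def Qpq (n : ℕ) (P : Set (Set (Finset ℕ))) (p q : Finset ℕ) : Set (Finset ℕ) :=
  {z | z.card = 2 * n ∧ EquivP P (p.image (nth z)) (q.image (nth z))}

/-- `P*` : the atoms of the field of subsets of `[ω]^{2n}` generated by the sets `Q_{pq}`. -/
def Atoms (n : ℕ) (P : Set (Set (Finset ℕ))) : Set (Set (Finset ℕ)) :=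
  {Q | Q.Nonempty ∧ ∃ S : Finset ℕ → Finset ℕ → Set (Finset ℕ),
    (∀ p ∈ idx n, ∀ q ∈ idx n, S p q = Qpq n P p q ∨ S p q = cube (2 * n) \ Qpq n P p q) ∧
    Q = ⋂ p ∈ idx n, ⋂ q ∈ idx n, S p q}

/-- `I_{pq} = { i < n : p_[i] = q_[i] }`. -/
def Ipq (n : ℕ) (p q : Finset ℕ) : Set ℕ := {i | i < n ∧ nth p i = nth q i}

/-- `I(Q) = ⋂ { I_{pq} : p, q ∈ [2n]^n, Q ⊆ Q_{pq} }`. -/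
def IofQ (n : ℕ) (P : Set (Set (Finset ℕ))) (Q : Set (Finset ℕ)) : Set ℕ :=
  ⋂ p ∈ idx n, ⋂ q ∈ idx n, ⋂ (_ : Q ⊆ Qpq n P p q), Ipq n p q

/-- `ρ(a,b) = |(a △ b) ∩ X|`, identifying `a` with `{0, …, a-1}`. -/
noncomputable def rho (X : Set ℕ) (a b : ℕ) : ℕ := (X ∩ Set.Ico (min a b) (max a b)).ncard

/-- The sparsity `d(x) = min { ρ(a,b) : a, b ∈ x ∪ {e}, a ≠ b }` (with `d(∅) = ⊤ = ω`). -/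
noncomputable def sparsity (X : Set ℕ) (e : ℕ) (x : Finset ℕ) : ℕ∞ :=
  ⨅ a ∈ (x ∪ {e} : Finset ℕ), ⨅ b ∈ (x ∪ {e} : Finset ℕ), ⨅ _ : a ≠ b, (rho X a b : ℕ∞)

/-- `r(x,y) = max_{b ∈ y} min { ρ(a,b) : a ∈ x ∪ {e}, a ≤ b }`. -/
noncomputable def rfun (X : Set ℕ) (e : ℕ) (x y : Finset ℕ) : ℕ :=
  y.sup fun b => sInf ((fun a => rho X a b) '' {a : ℕ | a ∈ (x ∪ {e} : Finset ℕ) ∧ a ≤ b})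

/-- `x →_{pq} y` : there is `z ∈ [X]^{2n}` with `{z_[i] : i ∈ p} = x` and `{z_[i] : i ∈ q} = y`. -/
def Arrow (X : Set ℕ) (n : ℕ) (p q x y : Finset ℕ) : Prop :=
  ∃ z : Finset ℕ, ↑z ⊆ X ∧ z.card = 2 * n ∧ p.image (nth z) = x ∧ q.image (nth z) = y

/-- `x ↔_Q y` : `x →_{pq} y` for some `p, q ∈ [2n]^n` with `Q ⊆ Q_{pq}`. -/
def RelQ (n : ℕ) (P : Set (Set (Finset ℕ))) (Q : Set (Finset ℕ)) (X : Set ℕ)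
    (x y : Finset ℕ) : Prop :=
  ∃ p ∈ idx n, ∃ q ∈ idx n, Q ⊆ Qpq n P p q ∧ Arrow X n p q x y

/-- `x_0, …, x_l` is a `t`-cascade. -/
def IsCascade (n : ℕ) (P : Set (Set (Finset ℕ))) (Q : Set (Finset ℕ)) (X : Set ℕ) (e : ℕ)
    (t l : ℕ) (x : ℕ → Finset ℕ) : Prop :=
  (∀ i ≤ l, ↑(x i) ⊆ X \ {e} ∧ (x i).card = n) ∧
  ∀ i < l, ((n ^ (t - 2 * i) : ℕ) : ℕ∞) ≤ sparsity X e (x i) ∧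
    rfun X e (x i) (x (i + 1)) ≤ n ^ (t - 2 * i - 1) ∧
    RelQ n P Q X (x i) (x (i + 1))

/-- The `n`-fold Fubini power `u ⊗ ⋯ ⊗ u` of an ultrafilter on `ℕ`, as an
ultrafilter on `Fin n → ℕ`. -/
noncomputable def tensorPow (u : Ultrafilter ℕ) : (n : ℕ) → Ultrafilter (Fin n → ℕ)
  | 0 => pure (fun i => i.elim0)
  | n + 1 => u.bind fun a => (tensorPow u n).map (Fin.cons a)

/-- The diagonal ultrafilter extension `f̃(u, u, …, u)` of `f : ℕ^n → ℕ`. -/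
noncomputable def diagExt {n : ℕ} (f : (Fin n → ℕ) → ℕ) (u : Ultrafilter ℕ) : Ultrafilter ℕ :=
  (tensorPow u n).map f

/-- The Rudin–Keisler preorder. -/
def RKle (u v : Ultrafilter ℕ) : Prop := ∃ h : ℕ → ℕ, v.map h = u

/-- Rudin–Keisler equivalence. -/
def RKeq (u v : Ultrafilter ℕ) : Prop := RKle u v ∧ RKle v u

/-- `u` is nonprincipal: it contains no finite set. -/
def Nonprincipal (u : Ultrafilter ℕ) : Prop := ∀ S : Set ℕ, S.Finite → S ∉ u

/-- `u` is a Ramsey ultrafilter. -/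
def IsRamseyU (u : Ultrafilter ℕ) : Prop :=
  Nonprincipal u ∧ ∀ n : ℕ, 1 ≤ n → ∀ P : Set (Set (Finset ℕ)),
    IsPartitionOn (cube n) P → P.Finite → ∃ X ∈ u, Homog n P X

/-- `f : ℕ^n → ℕ` is selectively upward injective on `X` w.r.t. the index set `I`
(`I = ∅` gives "upward constant"). -/
def SelUpInjWrt (n : ℕ) (f : (Fin n → ℕ) → ℕ) (X : Set ℕ) (I : Set (Fin n)) : Prop :=
  ∀ x y : Fin n → ℕ, (∀ i, x i ∈ X) → (∀ i, y i ∈ X) → StrictMono x → StrictMono y →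
    (f x = f y ↔ ∀ i ∈ I, x i = y i)

section Helpers

open Finset

theorem nth_eq_emb {n : ℕ} (s : Finset ℕ) (h : s.card = n) (i : Fin n) :
    nth s i = s.orderEmbOfFin h i := by
  rw [Finset.orderEmbOfFin_apply]
  unfold nth
  have hi : (i : ℕ) < (s.sort (· ≤ ·)).length := by
    rw [Finset.length_sort, h]; exact i.2
  simp [List.getD_eq_getElem?_getD, List.getElem?_eq_getElem hi]

theorem nth_image {n : ℕ} (f : Fin n → ℕ) (hf : StrictMono f) (i : Fin n) :
    nth (univ.image f) i = f i := by
  have hc : (univ.image f).card = n := by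
    rw [Finset.card_image_of_injective _ hf.injective]; simp
  rw [nth_eq_emb _ hc i, ← Finset.orderEmbOfFin_unique hc (f := f) (by simp) hf]

theorem nth_rank (z : Finset ℕ) (x : ℕ) (hx : x ∈ z) :
    nth z (z.filter (· < x)).card = x := by
  have hr : x ∈ Set.range (z.orderEmbOfFin rfl) := by
    rw [Finset.range_orderEmbOfFin]; exact hx
  obtain ⟨i, rfl⟩ := hr
  have : (z.filter (· < z.orderEmbOfFin rfl i)) = (Finset.Iio i).image (z.orderEmbOfFin rfl) := by
    ext y
    simp only [mem_filter, mem_image, mem_Iio]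
    constructor
    · rintro ⟨hy, hlt⟩
      have hr : y ∈ Set.range (z.orderEmbOfFin rfl) := by
        rw [Finset.range_orderEmbOfFin]; exact hy
      obtain ⟨j, rfl⟩ := hr
      exact ⟨j, by simpa using hlt, rfl⟩
    · rintro ⟨j, hj, rfl⟩
      exact ⟨Finset.orderEmbOfFin_mem _ _ _, by simpa using hj⟩
  rw [this, Finset.card_image_of_injective _ (z.orderEmbOfFin rfl).injective, Fin.card_Iio,
    nth_eq_emb z rfl i]

theorem rank_union {n : ℕ} (f g : Fin n → ℕ) (hf : StrictMono f) (hg : StrictMono g) (y : ℕ) :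
    ((univ.image f ∪ univ.image g).filter (· < y)).card =
      (univ.filter (fun k => f k < y)).card +
        (univ.filter (fun j => (∀ k, ¬ f k < g j → g j < f k) ∧ g j < y)).card := by
  rw [← Finset.card_image_of_injective (univ.filter (fun k => f k < y)) hf.injective,
    ← Finset.card_image_of_injective
      (univ.filter (fun j => (∀ k, ¬ f k < g j → g j < f k) ∧ g j < y)) hg.injective,
    ← Finset.card_union_of_disjoint]
  · congr 1
    ext t
    simp only [mem_filter, mem_union, mem_image, mem_univ, true_and]
    constructor
    · rintro ⟨⟨k, rfl⟩ | ⟨j, rfl⟩, hlt⟩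
      · exact Or.inl ⟨k, hlt, rfl⟩
      · by_cases h : ∃ k, f k = g j
        · obtain ⟨k, hk⟩ := h
          exact Or.inl ⟨k, by omega, hk⟩
        · push Not at h
          refine Or.inr ⟨j, ⟨fun k hk => ?_, hlt⟩, rfl⟩
          have := h k
          omega
    · rintro (⟨k, h, rfl⟩ | ⟨j, h, rfl⟩)
      · exact ⟨Or.inl ⟨k, rfl⟩, h⟩
      · exact ⟨Or.inr ⟨j, rfl⟩, h.2⟩
  · rw [Finset.disjoint_left]
    intro t ht ht'
    simp only [mem_filter, mem_image, mem_univ, true_and] at ht ht'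
    obtain ⟨k, _, rfl⟩ := ht
    obtain ⟨j, h, hj⟩ := ht'
    have := h.1 k
    omega

/-- Pair of tuples realised as patterns in a `2n`-subset of `X`. -/
theorem exists_pattern {n : ℕ} (X : Set ℕ) (hX : X.Infinite) (f g : Fin n → ℕ)
    (hf : StrictMono f) (hg : StrictMono g) (hfX : ∀ i, f i ∈ X) (hgX : ∀ i, g i ∈ X) :
    ∃ z : Finset ℕ, ↑z ⊆ X ∧ z.card = 2 * n ∧
      ∀ y ∈ univ.image f ∪ univ.image g,
        nth z ((univ.image f ∪ univ.image g).filter (· < y)).card = y := by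
  set S := univ.image f ∪ univ.image g with hS
  have hSc : S.card ≤ 2 * n := by
    refine (Finset.card_union_le _ _).trans ?_
    rw [Finset.card_image_of_injective _ hf.injective, Finset.card_image_of_injective _ hg.injective]
    simp; omega
  have hinf : (X \ Set.Iic (S.sup id)).Infinite := hX.sdiff (Set.finite_Iic _)
  obtain ⟨T, hT, hTc⟩ := hinf.exists_subset_card_eq (2 * n - S.card)
  have hlt : ∀ s ∈ S, ∀ t ∈ T, s < t := by
    intro s hs t ht
    have h1 : s ≤ S.sup id := Finset.le_sup (f := id) hs
    have h2 := (hT ht).2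
    simp only [Set.mem_Iic] at h2
    omega
  have hd : Disjoint S T := by
    rw [Finset.disjoint_left]
    intro t h1 h2
    exact lt_irrefl _ (hlt t h1 t h2)
  refine ⟨S ∪ T, ?_, ?_, ?_⟩
  · intro t ht
    simp only [coe_union, Set.mem_union, mem_coe] at ht
    rcases ht with ht | ht
    · simp only [hS, mem_union, mem_image, mem_univ, true_and] at ht
      rcases ht with ⟨k, rfl⟩ | ⟨k, rfl⟩
      · exact hfX k
      · exact hgX k
    · exact (hT ht).1
  · rw [Finset.card_union_of_disjoint hd]; omega
  · intro y hy
    have : (S.filter (· < y)) = (S ∪ T).filter (· < y) := by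
      ext t
      simp only [mem_filter, mem_union]
      constructor
      · rintro ⟨h1, h2⟩; exact ⟨Or.inl h1, h2⟩
      · rintro ⟨h1 | h1, h2⟩
        · exact ⟨h1, h2⟩
        · have := hlt y hy t h1; omega
    rw [this]
    exact nth_rank _ _ (mem_union_left _ hy)

theorem pattern_idx {n : ℕ} (S z : Finset ℕ) (hSc : S.card ≤ 2 * n)
    (hz : ∀ y ∈ S, nth z (S.filter (· < y)).card = y)
    (f : Fin n → ℕ) (hf : StrictMono f) (hfS : ∀ i, f i ∈ S) :
    (univ.image fun i => (S.filter (· < f i)).card) ∈ idx n ∧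
      (univ.image fun i => (S.filter (· < f i)).card).image (nth z) = univ.image f := by
  constructor
  · unfold idx
    rw [Finset.mem_powersetCard]
    constructor
    · intro t ht
      simp only [mem_image, mem_univ, true_and] at ht
      obtain ⟨i, rfl⟩ := ht
      rw [Finset.mem_range]
      refine lt_of_lt_of_le (Finset.card_lt_card ?_) hSc
      rw [Finset.filter_ssubset]
      exact ⟨f i, hfS i, lt_irrefl _⟩
    · rw [Finset.card_image_of_injective]
      · simp
      · intro i j hij
        apply hf.injective
        rw [← hz _ (hfS i), ← hz _ (hfS j)]
        simp only at hij
        rw [hij]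
  · rw [Finset.image_image]
    congr 1
    ext i
    exact hz _ (hfS i)

theorem order_type {n : ℕ} (X : Set ℕ) (hX : X.Infinite) (P : Set (Set (Finset ℕ)))
    (hom : ∀ z z' : Finset ℕ, ↑z ⊆ X → z.card = 2 * n → ↑z' ⊆ X → z'.card = 2 * n →
      ∀ p ∈ idx n, ∀ q ∈ idx n, EquivP P (p.image (nth z)) (q.image (nth z)) →
        EquivP P (p.image (nth z')) (q.image (nth z')))
    (f g f' g' : Fin n → ℕ)
    (hf : StrictMono f) (hg : StrictMono g) (hfX : ∀ i, f i ∈ X) (hgX : ∀ i, g i ∈ X)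
    (hf' : StrictMono f') (hg' : StrictMono g') (hfX' : ∀ i, f' i ∈ X) (hgX' : ∀ i, g' i ∈ X)
    (h1 : ∀ i j, f i < g j ↔ f' i < g' j) (h2 : ∀ i j, g j < f i ↔ g' j < f' i)
    (hE : EquivP P (univ.image f) (univ.image g)) :
    EquivP P (univ.image f') (univ.image g') := by
  have hcard : ∀ f g : Fin n → ℕ, (univ.image f ∪ univ.image g).card ≤ 2 * n := by
    intro f g
    refine (Finset.card_union_le _ _).trans ?_
    have a1 := Finset.card_image_le (s := univ) (f := f)
    have a2 := Finset.card_image_le (s := univ) (f := g)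
    simp at a1 a2
    omega
  obtain ⟨z, hzX, hzc, hz⟩ := exists_pattern X hX f g hf hg hfX hgX
  obtain ⟨z', hzX', hzc', hz'⟩ := exists_pattern X hX f' g' hf' hg' hfX' hgX'
  obtain ⟨A1, A2⟩ := pattern_idx _ z (hcard f g) hz f hf (by simp)
  obtain ⟨B1, B2⟩ := pattern_idx _ z (hcard f g) hz g hg (by simp)
  obtain ⟨A1', A2'⟩ := pattern_idx _ z' (hcard f' g') hz' f' hf' (by simp)
  obtain ⟨B1', B2'⟩ := pattern_idx _ z' (hcard f' g') hz' g' hg' (by simp)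
  have e1 : (fun i => ((univ.image f ∪ univ.image g).filter (· < f i)).card) =
      (fun i => ((univ.image f' ∪ univ.image g').filter (· < f' i)).card) := by
    ext i
    rw [rank_union f g hf hg, rank_union f' g' hf' hg']
    simp only [h1, h2, hf.lt_iff_lt, hf'.lt_iff_lt]
  have e2 : (fun i => ((univ.image f ∪ univ.image g).filter (· < g i)).card) =
      (fun i => ((univ.image f' ∪ univ.image g').filter (· < g' i)).card) := by
    ext i
    rw [rank_union f g hf hg, rank_union f' g' hf' hg']
    simp only [h1, h2, hg.lt_iff_lt, hg'.lt_iff_lt]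
  rw [← e1] at A2'
  rw [← e2] at B2'
  rw [← A2', ← B2']
  apply hom z z' hzX hzc hzX' hzc' _ A1 _ B1
  rw [A2, B2]
  exact hE

theorem one_diff {n : ℕ} (c d : Fin n → ℕ) (hc : StrictMono c) (hd : StrictMono d) (i : Fin n)
    (hcd : ∀ j, j ≠ i → c j = d j) (hi : c i < d i) (k l : Fin n) :
    (c k < d l ↔ k < l ∨ (k = i ∧ l = i)) ∧ (d l < c k ↔ l < k) := by
  by_cases hk : k = i
  · subst hk
    by_cases hl : l = k
    · subst hl
      simp [hi, hi.le]
    · rw [← hcd l hl]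
      simp [hc.lt_iff_lt, hl]
  · rw [hcd k hk]
    simp [hd.lt_iff_lt, hk]

/-- The abstract canonization lemma: `E` invariant under order type. -/
theorem canon_abstract {n : ℕ} (E : (Fin n → ℕ) → (Fin n → ℕ) → Prop)
    (refl : ∀ a, StrictMono a → E a a)
    (symm : ∀ a b, E a b → E b a)
    (trans : ∀ a b c, E a b → E b c → E a c)
    (ot : ∀ a b c d, StrictMono a → StrictMono b → StrictMono c → StrictMono d →
      (∀ i j, a i < b j ↔ c i < d j) → (∀ i j, b j < a i ↔ d j < c i) → E a b → E c d) :
    ∃ I : Set (Fin n), ∀ a b, StrictMono a → StrictMono b → (E a b ↔ ∀ i ∈ I, a i = b i) := by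
  classical
  set free : Fin n → Prop := fun i => ∃ a b, StrictMono a ∧ StrictMono b ∧
    (∀ j, j ≠ i → a j = b j) ∧ a i ≠ b i ∧ E a b with hfree
  have L1 : ∀ i, free i → ∀ c d, StrictMono c → StrictMono d → (∀ j, j ≠ i → c j = d j) →
      E c d := by
    rintro i ⟨a, b, ha, hb, hab, hne, hE⟩
    obtain ⟨a, b, ha, hb, hab, hlt, hE⟩ : ∃ a b, StrictMono a ∧ StrictMono b ∧
        (∀ j, j ≠ i → a j = b j) ∧ a i < b i ∧ E a b := by
      rcases lt_or_gt_of_ne hne with h | h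
      · exact ⟨a, b, ha, hb, hab, h, hE⟩
      · exact ⟨b, a, hb, ha, fun j hj => (hab j hj).symm, h, symm _ _ hE⟩
    have key : ∀ c d, StrictMono c → StrictMono d → (∀ j, j ≠ i → c j = d j) → c i < d i →
        E c d := by
      intro c d hc hd hcd hi
      refine ot a b c d ha hb hc hd ?_ ?_ hE
      · intro k l
        rw [(one_diff a b ha hb i hab hlt k l).1, (one_diff c d hc hd i hcd hi k l).1]
      · intro k l
        rw [(one_diff a b ha hb i hab hlt k l).2, (one_diff c d hc hd i hcd hi k l).2]
    intro c d hc hd hcd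
    rcases lt_trichotomy (c i) (d i) with h | h | h
    · exact key c d hc hd hcd h
    · have : c = d := by
        ext j
        by_cases hj : j = i
        · rw [hj, h]
        · exact hcd j hj
      rw [← this]; exact refl c hc
    · exact symm _ _ (key d c hd hc (fun j hj => (hcd j hj).symm) h)
  have L2 : ∀ a b, StrictMono a → StrictMono b → (∀ i, ¬ free i → a i = b i) →
      E (fun i => max (a i) (b i)) a := by
    intro a b ha hb hab
    have hmono : ∀ k : ℕ, StrictMono (fun j : Fin n => if j.val < k then a j else max (a j) (b j)) := by
      intro k i j hij
      have h1 := ha hij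
      have h2 := hb hij
      have h3 : i.val < j.val := hij
      simp only
      split_ifs <;> omega
    have step : ∀ k : ℕ, E (fun i => max (a i) (b i))
        (fun j : Fin n => if j.val < k then a j else max (a j) (b j)) := by
      intro k
      induction k with
      | zero =>
        simp only [Nat.not_lt_zero, if_false]
        refine refl _ ?_
        simpa using hmono 0
      | succ k ih =>
        refine trans _ _ _ ih ?_
        by_cases hk : ∃ i : Fin n, i.val = k ∧ free i
        · obtain ⟨i, hik, hi⟩ := hk
          apply L1 i hi _ _ (hmono _) (hmono _)
          intro j hj
          have : j.val ≠ k := fun h => hj (Fin.ext (by omega))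
          split_ifs <;> omega
        · have : (fun j : Fin n => if j.val < k then a j else max (a j) (b j)) =
              (fun j : Fin n => if j.val < k + 1 then a j else max (a j) (b j)) := by
            ext j
            by_cases hj : j.val = k
            · have := hab j (fun h => hk ⟨j, hj, h⟩)
              simp [this]
            · split_ifs <;> omega
          rw [← this]
          exact refl _ (hmono _)
    have := step n
    simpa using this
  have L2' : ∀ a b, StrictMono a → StrictMono b → (∀ i, ¬ free i → a i = b i) → E a b := by
    intro a b ha hb hab
    have h1 := L2 a b ha hb hab
    have h2 := L2 b a hb ha (fun i hi => (hab i hi).symm)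
    have h3 : (fun i => max (b i) (a i)) = (fun i => max (a i) (b i)) :=
      funext fun i => max_comm _ _
    rw [h3] at h2
    exact trans _ _ _ (symm _ _ h1) h2
  have L3 : ∀ a b, StrictMono a → StrictMono b → E a b → ∀ i, ¬ free i → a i < b i →
      (∀ j, j < i → ¬ free j → a j = b j) → False := by
    intro a b ha hb hE i hi hlt hmin
    have sa : StrictMono (fun j => 3 * a j + 1) := fun x y h => by
      have := ha h
      simp only; omega
    have sb : StrictMono (fun j => 3 * b j + 1) := fun x y h => by
      have := hb h
      simp only; omega
    have sb2 : StrictMono (fun j => if free j then 3 * b j + 2 else 3 * b j + 1) := fun x y h => by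
      have := hb h
      simp only; split_ifs <;> omega
    have sa2 : StrictMono (fun j => if j = i then 3 * a j else 3 * a j + 1) := fun x y h => by
      have := ha h
      simp only; split_ifs <;> omega
    have E1 : E (fun j => 3 * a j + 1) (fun j => 3 * b j + 1) :=
      ot a b _ _ ha hb sa sb (fun k l => by omega) (fun k l => by omega) hE
    have E2 : E (fun j => 3 * b j + 1) (fun j => if free j then 3 * b j + 2 else 3 * b j + 1) :=
      L2' _ _ sb sb2 (fun j hj => by simp [hj])
    have E3 := trans _ _ _ E1 E2
    have hl : ∀ l, b l = a i → free l := by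
      intro l h
      by_contra hf
      have hli : l < i := by
        rw [← hb.lt_iff_lt]; omega
      have h1 := hmin l hli hf
      have h2 := ha hli
      omega
    have E4 : E (fun j => if j = i then 3 * a j else 3 * a j + 1)
        (fun j => if free j then 3 * b j + 2 else 3 * b j + 1) := by
      refine ot _ _ _ _ sa sb2 sa2 sb2 ?_ ?_ E3
      · intro k l
        by_cases hk : k = i
        · subst hk
          have := hl l
          by_cases hf : free l
          · simp only [hf, if_true]; omega
          · have h3 : b l ≠ a k := fun h => hf (this h)
            simp only [hf, if_true, if_false]; omega
        · simp [hk]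
      · intro k l
        by_cases hk : k = i
        · subst hk
          have := hl l
          by_cases hf : free l
          · simp only [hf, if_true]; omega
          · have h3 : b l ≠ a k := fun h => hf (this h)
            simp only [hf, if_true, if_false]; omega
        · simp [hk]
    apply hi
    refine ⟨_, _, sa, sa2, ?_, ?_, trans _ _ _ E3 (symm _ _ E4)⟩
    · intro j hj; simp [hj]
    · simp
  refine ⟨{i | ¬ free i}, fun a b ha hb => ⟨fun hE => ?_, fun h => L2' a b ha hb h⟩⟩
  intro i
  induction i using WellFoundedLT.induction with
  | ind i ih =>
    intro hi
    rcases lt_trichotomy (a i) (b i) with h | h | h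
    · exact (L3 a b ha hb hE i hi h (fun j hj hf => ih j hj hf)).elim
    · exact h
    · exact (L3 b a hb ha (symm _ _ hE) i hi h (fun j hj hf => (ih j hj hf).symm)).elim

theorem infinite_of_mem (u : Ultrafilter ℕ) (hu : Nonprincipal u) (X : Set ℕ) (hX : X ∈ u) :
    X.Infinite := fun h => hu X h hX

theorem ramsey_imp (u : Ultrafilter ℕ) (hR : IsRamseyU u) (n : ℕ) (hn : 1 ≤ n)
    (P : Set (Set (Finset ℕ))) (hP : IsPartitionOn (cube n) P) : ∃ X ∈ u, Canon n P X := by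
  classical
  obtain ⟨hu, hR⟩ := hR
  set col : Finset ℕ → Finset (Finset ℕ × Finset ℕ) := fun z =>
    (idx n ×ˢ idx n).filter (fun pq => EquivP P (pq.1.image (nth z)) (pq.2.image (nth z)))
    with hcol
  set Ps : Set (Set (Finset ℕ)) :=
    (fun F => {z | z.card = 2 * n ∧ col z = F}) '' (↑(idx n ×ˢ idx n).powerset : Set _) with hPs
  have hpart : IsPartitionOn (cube (2 * n)) Ps := by
    constructor
    · ext z
      simp only [Set.mem_sUnion, hPs, Set.mem_image, cube, Set.mem_ofPred_eq]
      constructor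
      · rintro ⟨_, ⟨F, _, rfl⟩, hz⟩
        exact hz.1
      · intro hz
        exact ⟨_, ⟨col z, Finset.mem_coe.2 (Finset.mem_powerset.2 (Finset.filter_subset _ _)), rfl⟩, hz, rfl⟩
    · rintro _ ⟨F, _, rfl⟩ _ ⟨G, _, rfl⟩
      by_cases h : F = G
      · right; rw [h]
      · left
        ext z
        simp only [Set.mem_inter_iff, Set.mem_ofPred_eq, Set.mem_empty_iff_false, iff_false]
        rintro ⟨⟨_, h1⟩, _, h2⟩
        exact h (h1.symm.trans h2)
  obtain ⟨X, hXu, A, hA, hh⟩ := hR (2 * n) (by omega) Ps hpart ((Finset.finite_toSet _).image _)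
  refine ⟨X, hXu, ?_⟩
  have hX := infinite_of_mem u hu X hXu
  have hom : ∀ z z' : Finset ℕ, ↑z ⊆ X → z.card = 2 * n → ↑z' ⊆ X → z'.card = 2 * n →
      ∀ p ∈ idx n, ∀ q ∈ idx n, EquivP P (p.image (nth z)) (q.image (nth z)) →
        EquivP P (p.image (nth z')) (q.image (nth z')) := by
    intro z z' hz hzc hz' hzc' p hp q hq hE
    obtain ⟨F, _, rfl⟩ := hA
    have h1 := (hh z hz hzc).2
    have h2 := (hh z' hz' hzc').2
    have h3 : (p, q) ∈ col z := by
      simp only [hcol, mem_filter, mem_product]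
      exact ⟨⟨hp, hq⟩, hE⟩
    rw [h1, ← h2] at h3
    simp only [hcol, mem_filter] at h3
    exact h3.2
  set e := Nat.nth (· ∈ X) with he
  have hemono : StrictMono e := Nat.nth_strictMono hX
  have heX : ∀ k, e k ∈ X := fun k => Nat.nth_mem_of_infinite hX k
  have hsurj : ∀ x ∈ X, ∃ k, e k = x := by
    intro x hx
    have := Nat.range_nth_of_infinite (p := (· ∈ X)) hX
    have h : x ∈ Set.range e := by rw [he, this]; exact hx
    exact h
  have mem_cube : ∀ a : Fin n → ℕ, StrictMono a → ∃ A ∈ P, univ.image (e ∘ a) ∈ A := by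
    intro a ha
    have : univ.image (e ∘ a) ∈ ⋃₀ P := by
      rw [hP.1]
      simp only [cube, Set.mem_ofPred_eq]
      rw [Finset.card_image_of_injective _ (hemono.comp ha).injective]
      simp
    obtain ⟨A, hA, h⟩ := this
    exact ⟨A, hA, h⟩
  obtain ⟨I, hI⟩ := canon_abstract
    (fun a b : Fin n → ℕ => EquivP P (univ.image (e ∘ a)) (univ.image (e ∘ b)))
    (fun a ha => by
      obtain ⟨A, hA, h⟩ := mem_cube a ha
      exact ⟨A, hA, h, h⟩)
    (fun a b ⟨A, hA, h1, h2⟩ => ⟨A, hA, h2, h1⟩)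
    (fun a b c ⟨A, hA, h1, h2⟩ ⟨B, hB, h3, h4⟩ => by
      rcases hP.2 A hA B hB with h | h
      · have : univ.image (e ∘ b) ∈ A ∩ B := ⟨h2, h3⟩
        rw [h] at this
        exact this.elim
      · subst h
        exact ⟨A, hA, h1, h4⟩)
    (fun a b c d ha hb hc hd h1 h2 hE => by
      refine order_type X hX P hom _ _ _ _ (hemono.comp ha) (hemono.comp hb) (fun i => heX _)
        (fun i => heX _) (hemono.comp hc) (hemono.comp hd) (fun i => heX _) (fun i => heX _) ?_ ?_ hE
      · intro i j
        simp only [Function.comp, hemono.lt_iff_lt, h1]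
      · intro i j
        simp only [Function.comp, hemono.lt_iff_lt, h2])
  have repr : ∀ p : Finset ℕ, ↑p ⊆ X → p.card = n →
      ∃ a : Fin n → ℕ, StrictMono a ∧ univ.image (e ∘ a) = p := by
    intro p hp hc
    have h : ∀ i, ∃ k, e k = p.orderEmbOfFin hc i :=
      fun i => hsurj _ (hp (Finset.orderEmbOfFin_mem _ _ _))
    choose a ha using h
    refine ⟨a, ?_, ?_⟩
    · intro i j hij
      rw [← hemono.lt_iff_lt, ha, ha]
      simpa using hij
    · have : e ∘ a = p.orderEmbOfFin hc := funext ha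
      rw [this]
      exact Finset.image_orderEmbOfFin_univ p hc
  refine ⟨(fun i : Fin n => (i : ℕ)) '' I, ?_, ?_⟩
  · rintro _ ⟨i, _, rfl⟩
    exact i.2
  · intro p q hp hpc hq hqc
    obtain ⟨a, ha, rfl⟩ := repr p hp hpc
    obtain ⟨b, hb, rfl⟩ := repr q hq hqc
    rw [hI a b ha hb]
    simp only [Set.forall_mem_image]
    refine forall₂_congr fun i _ => ?_
    rw [nth_image _ (hemono.comp ha), nth_image _ (hemono.comp hb)]
    simp [hemono.injective.eq_iff]

theorem canon_imp (u : Ultrafilter ℕ) (hu : Nonprincipal u) (n : ℕ)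
    (P : Set (Set (Finset ℕ))) (hP : IsPartitionOn (cube n) P) (hfin : P.Finite)
    (X : Set ℕ) (hXu : X ∈ u) (hX : Canon n P X) : Homog n P X := by
  classical
  have hXi := infinite_of_mem u hu X hXu
  obtain ⟨I, hIn, hI⟩ := hX
  set e := Nat.nth (· ∈ X) with he
  have hemono : StrictMono e := Nat.nth_strictMono hXi
  have heX : ∀ k, e k ∈ X := fun k => Nat.nth_mem_of_infinite hXi k
  have hsm : ∀ m : ℕ, StrictMono (fun i : Fin n => e (m + i)) := by
    intro m i j hij
    apply hemono
    have : i.val < j.val := hij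
    omega
  set t : ℕ → Finset ℕ := fun m => univ.image (fun i : Fin n => e (m + i)) with ht
  have htc : ∀ m, (t m).card = n := by
    intro m
    rw [ht]
    simp only
    rw [Finset.card_image_of_injective _ (hsm m).injective]
    simp
  have htX : ∀ m, (↑(t m) : Set ℕ) ⊆ X := by
    intro m x hx
    simp only [ht, coe_image, Set.mem_image] at hx
    obtain ⟨i, _, rfl⟩ := hx
    exact heX _
  have hmem : ∀ m, ∃ A ∈ P, t m ∈ A := by
    intro m
    have : t m ∈ ⋃₀ P := by
      rw [hP.1]; exact htc m
    obtain ⟨A, hA, h⟩ := this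
    exact ⟨A, hA, h⟩
  have hIe : ∀ i, i ∉ I := by
    intro i hi
    have hin : i < n := hIn hi
    choose A hAP hA using hmem
    have hinj : Function.Injective A := by
      intro m m' h
      have h1 := (hI (t m) (t m') (htX m) (htc m) (htX m') (htc m')).1
        ⟨A m, hAP m, hA m, by rw [h]; exact hA m'⟩ i hi
      have h2 := nth_image _ (hsm m) ⟨i, hin⟩
      have h3 := nth_image _ (hsm m') ⟨i, hin⟩
      simp only [ht] at h1
      simp only at h2 h3
      rw [h2, h3] at h1
      have := hemono.injective h1
      omega
    exact Set.infinite_range_of_injective hinj (hfin.subset (by rintro _ ⟨m, rfl⟩; exact hAP m))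
  obtain ⟨A, hA, h0⟩ := hmem 0
  refine ⟨A, hA, fun s hs hsc => ?_⟩
  obtain ⟨B, hB, h1, h2⟩ := (hI (t 0) s (htX 0) (htc 0) hs hsc).2 (fun i hi => (hIe i hi).elim)
  rcases hP.2 A hA B hB with h | h
  · have : t 0 ∈ A ∩ B := ⟨h0, h1⟩
    rw [h] at this
    exact this.elim
  · rw [h]; exact h2

end Helpers

/-- a nonprincipal ultrafilter `u` on `ℕ` is Ramsey iff for every `n ≥ 1`
and every (not necessarily finite) partition `P` of `[ω]^n`, `u` contains a set canonical
for `P`. -/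
theorem stmt_16 (u : Ultrafilter ℕ) (hu : Nonprincipal u) :
    IsRamseyU u ↔
      ∀ n : ℕ, 1 ≤ n → ∀ P : Set (Set (Finset ℕ)), IsPartitionOn (cube n) P →
        ∃ X ∈ u, Canon n P X := by
  constructor
  · intro h n hn P hP
    exact ramsey_imp u h n hn P hP
  · intro h
    refine ⟨hu, fun n hn P hP hfin => ?_⟩
    obtain ⟨X, hX, hc⟩ := h n hn P hP
    exact ⟨X, hX, canon_imp u hu n P hP hfin X hX hc⟩
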